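/- Suppose the side information at each receiver is a deterministic function of the interfering source: V1 = h1(U1) is observed at Receiver 2 and V2 = h2(U2) is observed at Receiver 1, for deterministic functions h1, h2 applied letterwise. If the quadruple (H(V1), H(U1|V1), H(V2), H(U2|V2)) lies in the interior of the capacity region C_I of the interference channel with message side information at the receivers, then the sources U1 and U2 can be transmitted reliably to their respective receivers. Conversely, if (H(V1), H(U1|V1), H(V2), H(U2|V2)) is not in C_I, then the sources cannot be transmitted reliably. -/

import Mathlib

open Finset Real Filter
open scoped Classical

namespace Paper

/-- `p` is a probability mass function on the finite type `α`. -/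
def IsPMF {α : Type*} [Fintype α] (p : α → ℝ) : Prop :=
  (∀ a, 0 ≤ p a) ∧ ∑ a, p a = 1

/-- `k` is a transition probability (channel) from `α` to the finite type `β`. -/
def IsKernel {α β : Type*} [Fintype β] (k : α → β → ℝ) : Prop :=
  ∀ a, IsPMF (k a)

variable {Ω : Type*} [Fintype Ω]

/-- Probability that the random variable `X` takes the value `x`, under the weight `p`. -/
noncomputable def pr {α : Type*} (p : Ω → ℝ) (X : Ω → α) (x : α) : ℝ :=
  ∑ ω, if X ω = x then p ω else 0

/-- Shannon entropy (base 2) of the random variable `X` under `p`. -/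
noncomputable def ent {α : Type*} [Fintype α] (p : Ω → ℝ) (X : Ω → α) : ℝ :=
  ∑ x, -(pr p X x * Real.logb 2 (pr p X x))

/-- Conditional entropy `H(X|Y) = H(X,Y) - H(Y)`. -/
noncomputable def condEnt {α β : Type*} [Fintype α] [Fintype β]
    (p : Ω → ℝ) (X : Ω → α) (Y : Ω → β) : ℝ :=
  ent p (fun ω => (X ω, Y ω)) - ent p Y

/-- Mutual information `I(X;Y) = H(X) + H(Y) - H(X,Y)`. -/
noncomputable def mi {α β : Type*} [Fintype α] [Fintype β]
    (p : Ω → ℝ) (X : Ω → α) (Y : Ω → β) : ℝ :=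
  ent p X + ent p Y - ent p (fun ω => (X ω, Y ω))

/-- Conditional mutual information `I(X;Y|Z) = H(X,Z) + H(Y,Z) - H(X,Y,Z) - H(Z)`. -/
noncomputable def cmi {α β γ : Type*} [Fintype α] [Fintype β] [Fintype γ]
    (p : Ω → ℝ) (X : Ω → α) (Y : Ω → β) (Z : Ω → γ) : ℝ :=
  ent p (fun ω => (X ω, Z ω)) + ent p (fun ω => (Y ω, Z ω))
    - ent p (fun ω => (X ω, Y ω, Z ω)) - ent p Z

/-- The Markov chain `A → B → C`: `A` and `C` are conditionally independent given `B`. -/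
def MarkovChain {α β γ : Type*} (p : Ω → ℝ) (A : Ω → α) (B : Ω → β) (C : Ω → γ) : Prop :=
  ∀ a b c, pr p (fun ω => (A ω, B ω, C ω)) (a, b, c) * pr p B b =
    pr p (fun ω => (A ω, B ω)) (a, b) * pr p (fun ω => (B ω, C ω)) (b, c)

/-! ## Statement 4: source-channel separation when the side information is a
deterministic function of the interfering source. -/

section Stmt4

variable {U1 V1 U2 V2 X1 X2 Y1 Y2 : Type}
  [Fintype U1] [Fintype V1] [Fintype U2] [Fintype V2]
  [Fintype X1] [Fintype X2] [Fintype Y1] [Fintype Y2]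

/-- Average error probability of a length-`n` code for the interference channel with
message side information `W_1s` at Receiver 2 and `W_2s` at Receiver 1. -/
noncomputable def PerrMsg (ch : X1 × X2 → Y1 × Y2 → ℝ) (n M1s M1p M2s M2p : ℕ)
    (f1 : Fin M1s × Fin M1p → Fin n → X1) (f2 : Fin M2s × Fin M2p → Fin n → X2)
    (g1 : (Fin n → Y1) → Fin M2s → Fin M1s × Fin M1p)
    (g2 : (Fin n → Y2) → Fin M1s → Fin M2s × Fin M2p) : ℝ :=
  (1 / ((M1s : ℝ) * M1p * M2s * M2p)) *
    ∑ w1 : Fin M1s × Fin M1p, ∑ w2 : Fin M2s × Fin M2p, ∑ y : Fin n → Y1 × Y2,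
      (∏ i, ch (f1 w1 i, f2 w2 i) (y i)) *
      (if g1 (fun i => (y i).1) w2.1 = w1 ∧ g2 (fun i => (y i).2) w1.1 = w2 then 0 else 1)

/-- Achievability of a rate quadruple `(R1s, R1p, R2s, R2p)` for the interference channel
with message side information at the receivers. -/
def AchMsg (ch : X1 × X2 → Y1 × Y2 → ℝ) (R : ℝ × ℝ × ℝ × ℝ) : Prop :=
  ∃ (M1s M1p M2s M2p : ℕ → ℕ)
    (f1 : ∀ n : ℕ, Fin (M1s n) × Fin (M1p n) → Fin n → X1)
    (f2 : ∀ n : ℕ, Fin (M2s n) × Fin (M2p n) → Fin n → X2)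
    (g1 : ∀ n : ℕ, (Fin n → Y1) → Fin (M2s n) → Fin (M1s n) × Fin (M1p n))
    (g2 : ∀ n : ℕ, (Fin n → Y2) → Fin (M1s n) → Fin (M2s n) × Fin (M2p n)),
    (∀ n : ℕ, 0 < n →
      R.1 ≤ Real.logb 2 (M1s n) / n ∧ R.2.1 ≤ Real.logb 2 (M1p n) / n ∧
      R.2.2.1 ≤ Real.logb 2 (M2s n) / n ∧ R.2.2.2 ≤ Real.logb 2 (M2p n) / n) ∧
    Tendsto (fun n => PerrMsg ch n (M1s n) (M1p n) (M2s n) (M2p n)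
      (f1 n) (f2 n) (g1 n) (g2 n)) atTop (nhds 0)

/-- The capacity region `C_I`: the closure of the set of achievable rate quadruples. -/
noncomputable def capMsg (ch : X1 × X2 → Y1 × Y2 → ℝ) : Set (ℝ × ℝ × ℝ × ℝ) :=
  closure { R | AchMsg ch R }

/-- Error probability of a length-`n` joint source-channel code when the side information
is the deterministic function `V1 = h1(U1)` (available at Receiver 2) and `V2 = h2(U2)`
(available at Receiver 1). -/
noncomputable def PerrDet (ch : X1 × X2 → Y1 × Y2 → ℝ)
    (pU1 : U1 → ℝ) (h1 : U1 → V1) (pU2 : U2 → ℝ) (h2 : U2 → V2) (n : ℕ)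
    (f1 : (Fin n → U1) → Fin n → X1) (f2 : (Fin n → U2) → Fin n → X2)
    (g1 : (Fin n → Y1) → (Fin n → V2) → Fin n → U1)
    (g2 : (Fin n → Y2) → (Fin n → V1) → Fin n → U2) : ℝ :=
  ∑ u1 : Fin n → U1, ∑ u2 : Fin n → U2, ∑ y : Fin n → Y1 × Y2,
    (∏ i, pU1 (u1 i)) * (∏ i, pU2 (u2 i)) * (∏ i, ch (f1 u1 i, f2 u2 i) (y i)) *
    (if g1 (fun i => (y i).1) (fun i => h2 (u2 i)) = u1 ∧
        g2 (fun i => (y i).2) (fun i => h1 (u1 i)) = u2 then 0 else 1)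

/-- Reliable transmission with deterministic side information about the interfering source. -/
def ReliableDet (ch : X1 × X2 → Y1 × Y2 → ℝ)
    (pU1 : U1 → ℝ) (h1 : U1 → V1) (pU2 : U2 → ℝ) (h2 : U2 → V2) : Prop :=
  ∃ (f1 : ∀ n : ℕ, (Fin n → U1) → Fin n → X1)
    (f2 : ∀ n : ℕ, (Fin n → U2) → Fin n → X2)
    (g1 : ∀ n : ℕ, (Fin n → Y1) → (Fin n → V2) → Fin n → U1)
    (g2 : ∀ n : ℕ, (Fin n → Y2) → (Fin n → V1) → Fin n → U2),
    Tendsto (fun n => PerrDet ch pU1 h1 pU2 h2 n (f1 n) (f2 n) (g1 n) (g2 n)) atTop (nhds 0)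

section Helpers

lemma IsPMF.nonempty {α : Type*} [Fintype α] {p : α → ℝ} (hp : IsPMF p) : Nonempty α := by
  by_contra h
  rw [not_nonempty_iff] at h
  have := hp.2
  simp at this

/-- A weighted average bounded by `c` has a term bounded by `c`. -/
lemma exists_le_of_avg {α : Type*} [Fintype α] {p : α → ℝ} (hp : IsPMF p) (f : α → ℝ) (c : ℝ)
    (h : ∑ a, p a * f a ≤ c) : ∃ a, f a ≤ c := by
  by_contra hcon
  push Not at hcon
  have h1 : ∑ a, p a * (f a - c) ≤ 0 := by
    simp only [mul_sub, Finset.sum_sub_distrib, ← Finset.sum_mul, hp.2]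
    linarith
  have h2 : ∀ a ∈ (Finset.univ : Finset α), 0 ≤ p a * (f a - c) := fun a _ =>
    mul_nonneg (hp.1 a) (by linarith [hcon a])
  have h3 := (Finset.sum_eq_zero_iff_of_nonneg h2).1 (le_antisymm h1 (Finset.sum_nonneg h2))
  have h4 : ∀ a, p a = 0 := fun a => by
    have := h3 a (Finset.mem_univ a)
    rcases mul_eq_zero.1 this with h | h
    · exact h
    · linarith [hcon a]
  have := hp.2
  simp [h4] at this

lemma sum_prod_pi {ι α : Type*} [Fintype ι] [DecidableEq ι] [Fintype α] (p : ι → α → ℝ) :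
    ∑ φ : ι → α, ∏ i, p i (φ i) = ∏ i, ∑ a, p i a := by
  rw [Finset.prod_univ_sum, Fintype.piFinset_univ]

lemma IsPMF.pi {ι α : Type*} [Fintype ι] [DecidableEq ι] [Fintype α] {p : α → ℝ} (hp : IsPMF p) :
    IsPMF (fun φ : ι → α => ∏ i, p (φ i)) := by
  refine ⟨fun φ => Finset.prod_nonneg fun i _ => hp.1 _, ?_⟩
  rw [sum_prod_pi (fun _ => p)]
  simp [hp.2]

lemma marg1 {ι α : Type*} [Fintype ι] [DecidableEq ι] [Fintype α] {p : α → ℝ} (hp : IsPMF p)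
    (j : ι) (F : α → ℝ) :
    ∑ φ : ι → α, (∏ i, p (φ i)) * F (φ j) = ∑ a, p a * F a := by
  have h : ∀ φ : ι → α, (∏ i, p (φ i)) * F (φ j)
      = ∏ i, (p (φ i) * if i = j then F (φ i) else 1) := by
    intro φ
    rw [Finset.prod_mul_distrib]
    congr 1
    simp
  simp only [h]
  rw [sum_prod_pi (fun i a => p a * if i = j then F a else 1)]
  rw [Finset.prod_eq_single j]
  · simp
  · intro b _ hb
    simp [hb, hp.2]
  · simp

lemma marg2 {ι α : Type*} [Fintype ι] [DecidableEq ι] [Fintype α] {p : α → ℝ} (hp : IsPMF p)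
    (j k : ι) (hjk : j ≠ k) (F G : α → ℝ) :
    ∑ φ : ι → α, (∏ i, p (φ i)) * (F (φ j) * G (φ k)) = (∑ a, p a * F a) * ∑ a, p a * G a := by
  have h : ∀ φ : ι → α, (∏ i, p (φ i)) * (F (φ j) * G (φ k))
      = ∏ i, (p (φ i) * ((if i = j then F (φ i) else 1) * if i = k then G (φ i) else 1)) := by
    intro φ
    rw [Finset.prod_mul_distrib, Finset.prod_mul_distrib]
    congr 1
    simp
  simp only [h]
  rw [sum_prod_pi (fun i a => p a * ((if i = j then F a else 1) * if i = k then G a else 1))]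
  rw [← Finset.mul_prod_erase _ _ (Finset.mem_univ j)]
  rw [← Finset.mul_prod_erase _ _ (Finset.mem_erase.2 ⟨hjk.symm, Finset.mem_univ k⟩)]
  rw [Finset.prod_eq_one]
  · simp [hjk, hjk.symm]
  · intro x hx
    simp only [Finset.mem_erase] at hx
    simp [hx.1, hx.2.1, hp.2]

lemma pr_nonneg {Ω α : Type*} [Fintype Ω] {p : Ω → ℝ} (hp : ∀ a, 0 ≤ p a) (X : Ω → α) (x : α) :
    0 ≤ pr p X x := Finset.sum_nonneg fun ω _ => by split_ifs; exacts [hp ω, le_rfl]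

lemma sum_pr_mul {Ω α : Type*} [Fintype Ω] [Fintype α] (p : Ω → ℝ) (X : Ω → α) (F : α → ℝ) :
    ∑ x, pr p X x * F x = ∑ ω, p ω * F (X ω) := by
  simp only [pr, Finset.sum_mul]
  rw [Finset.sum_comm]
  refine Finset.sum_congr rfl fun ω _ => ?_
  simp [ite_mul]

lemma sum_pr {Ω α : Type*} [Fintype Ω] [Fintype α] {p : Ω → ℝ} (hp : IsPMF p) (X : Ω → α) :
    ∑ x, pr p X x = 1 := by
  have := sum_pr_mul p X (fun _ => 1)
  simpa [hp.2] using this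

lemma le_pr {Ω α : Type*} [Fintype Ω] {p : Ω → ℝ} (hp : ∀ a, 0 ≤ p a) (X : Ω → α) (ω : Ω) :
    p ω ≤ pr p X (X ω) := by
  unfold pr
  have := Finset.single_le_sum (f := fun ω' => if X ω' = X ω then p ω' else 0)
    (fun i _ => by split_ifs; exacts [hp i, le_rfl]) (Finset.mem_univ ω)
  simpa using this

lemma pr_le_one {Ω α : Type*} [Fintype Ω] {p : Ω → ℝ} (hp : IsPMF p) (X : Ω → α) (x : α) :
    pr p X x ≤ 1 := by
  rw [← hp.2]
  refine Finset.sum_le_sum fun ω _ => ?_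
  split_ifs; exacts [le_rfl, hp.1 ω]

/-- Collision probability of i.i.d. samples. -/
lemma collision {α γ : Type*} [Fintype α] [Fintype γ] {M : ℕ} {p : α → ℝ} (hp : IsPMF p)
    (κ : α → γ) (β : ℝ) (hβ : 0 ≤ β) (j : Fin M) :
    ∑ φ : Fin M → α, (∏ i, p (φ i)) * (if ∃ k, k ≠ j ∧ κ (φ k) = κ (φ j) then 1 else 0)
      ≤ (∑ a, p a * if pr p κ (κ a) ≤ β then 0 else 1) + ((M : ℝ) - 1) * β := by
  have hW : ∀ φ : Fin M → α, 0 ≤ ∏ i, p (φ i) := hp.pi.1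
  have hpt : ∀ φ : Fin M → α, (if ∃ k, k ≠ j ∧ κ (φ k) = κ (φ j) then (1 : ℝ) else 0)
      ≤ (if pr p κ (κ (φ j)) ≤ β then (0 : ℝ) else 1)
        + ∑ k ∈ Finset.univ.erase j, ∑ c : γ,
          (if κ (φ j) = c ∧ pr p κ c ≤ β then (1 : ℝ) else 0) * (if κ (φ k) = c then 1 else 0) := by
    intro φ
    have hn : ∀ k : Fin M, ∀ c : γ, 0 ≤ (if κ (φ j) = c ∧ pr p κ c ≤ β then (1 : ℝ) else 0)
        * (if κ (φ k) = c then 1 else 0) := by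
      intro k c; split_ifs <;> norm_num
    have hn2 := Finset.sum_nonneg (s := Finset.univ.erase j)
      fun k _ => Finset.sum_nonneg (s := Finset.univ) fun c _ => hn k c
    by_cases hT : pr p κ (κ (φ j)) ≤ β
    · by_cases hc : ∃ k, k ≠ j ∧ κ (φ k) = κ (φ j)
      · obtain ⟨k, hk, hkj⟩ := hc
        rw [if_pos ⟨k, hk, hkj⟩, if_pos hT, zero_add]
        refine le_trans ?_ (Finset.single_le_sum (fun k _ => Finset.sum_nonneg fun c _ => hn k c)
          (Finset.mem_erase.2 ⟨hk, Finset.mem_univ k⟩))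
        refine le_trans ?_ (Finset.single_le_sum (fun c _ => hn k c) (Finset.mem_univ (κ (φ j))))
        simp [hT, hkj]
      · rw [if_neg hc, if_pos hT, zero_add]
        exact hn2
    · rw [if_neg hT]
      have : (if ∃ k, k ≠ j ∧ κ (φ k) = κ (φ j) then (1 : ℝ) else 0) ≤ 1 := by
        split_ifs <;> norm_num
      linarith
  refine (Finset.sum_le_sum fun φ _ => mul_le_mul_of_nonneg_left (hpt φ) (hW φ)).trans ?_
  simp only [mul_add, Finset.sum_add_distrib]
  refine add_le_add (le_of_eq ?_) ?_
  · exact marg1 hp j (fun a => if pr p κ (κ a) ≤ β then (0 : ℝ) else 1)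
  · simp only [Finset.mul_sum]
    rw [Finset.sum_comm]
    have hk : ∀ k ∈ Finset.univ.erase j, ∑ φ : Fin M → α, ∑ c : γ, (∏ i, p (φ i)) *
        ((if κ (φ j) = c ∧ pr p κ c ≤ β then (1 : ℝ) else 0) * (if κ (φ k) = c then 1 else 0))
        ≤ β := by
      intro k hk
      rw [Finset.sum_comm]
      have hjk : j ≠ k := (Finset.ne_of_mem_erase hk).symm
      have h1 : ∀ c : γ, ∑ φ : Fin M → α, (∏ i, p (φ i)) *
        ((if κ (φ j) = c ∧ pr p κ c ≤ β then (1 : ℝ) else 0) * (if κ (φ k) = c then 1 else 0))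
        ≤ pr p κ c * β := by
        intro c
        rw [marg2 hp j k hjk (fun a => if κ a = c ∧ pr p κ c ≤ β then (1 : ℝ) else 0)
          (fun a => if κ a = c then (1 : ℝ) else 0)]
        have h2 : ∑ a, p a * (if κ a = c then (1 : ℝ) else 0) = pr p κ c := by
          simp [pr]
        rw [h2]
        by_cases hb : pr p κ c ≤ β
        · simp only [hb, and_true]
          rw [h2]
          exact mul_le_mul_of_nonneg_left hb (pr_nonneg hp.1 _ _)
        · simp only [hb, and_false, if_false, mul_zero, Finset.sum_const_zero, zero_mul]
          exact mul_nonneg (pr_nonneg hp.1 _ _) hβ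
      refine (Finset.sum_le_sum fun c _ => h1 c).trans ?_
      rw [← Finset.sum_mul, sum_pr hp, one_mul]
    refine (Finset.sum_le_sum hk).trans ?_
    have hM : 1 ≤ M := Nat.one_le_of_lt (Fin.pos j)
    simp [Finset.card_erase_of_mem, Nat.cast_sub hM]

/-- Conditional law of `b` given `pj b = a`. -/
noncomputable def condK {A B : Type} [Fintype B] (P : B → ℝ) (pj : B → A) (a : A) (b : B) : ℝ :=
  if pr P pj a = 0 then P b else if pj b = a then P b / pr P pj a else 0

lemma condK_pmf {A B : Type} [Fintype B] {P : B → ℝ} (hP : IsPMF P) (pj : B → A) (a : A) :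
    IsPMF (condK P pj a) := by
  unfold condK
  by_cases h : pr P pj a = 0
  · simp only [h, if_true]
    exact hP
  · simp only [h, if_false]
    constructor
    · intro b
      dsimp only
      split_ifs
      · exact div_nonneg (hP.1 b) (pr_nonneg hP.1 _ _)
      · exact le_rfl
    · have : ∀ b, (if pj b = a then P b / pr P pj a else 0)
          = (if pj b = a then P b else 0) / pr P pj a := by
        intro b; split_ifs <;> simp
      simp only [this]
      rw [← Finset.sum_div]
      exact div_self h

lemma pr_mul_condK {A B : Type} [Fintype B] {P : B → ℝ} (hP : IsPMF P) (pj : B → A) (a : A)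
    (b : B) : pr P pj a * condK P pj a b = if pj b = a then P b else 0 := by
  unfold condK
  by_cases h : pr P pj a = 0
  · rw [h, zero_mul]
    split_ifs with h1
    · have := le_pr hP.1 pj b
      rw [h1, h] at this
      exact le_antisymm (hP.1 b) this
    · rfl
  · rw [if_neg h]
    split_ifs
    · field_simp
    · simp

lemma sum_condK {A B : Type} [Fintype A] [Fintype B] {P : B → ℝ} (hP : IsPMF P) (pj : B → A)
    (G : A → B → ℝ) :
    ∑ a, pr P pj a * ∑ b, condK P pj a b * G a b = ∑ b, P b * G (pj b) b := by
  simp only [Finset.mul_sum, ← mul_assoc, pr_mul_condK hP]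
  rw [Finset.sum_comm]
  refine Finset.sum_congr rfl fun b _ => ?_
  simp [ite_mul]

/-- Random superposition codebook for one user. -/
lemma single_user {A B : Type} [Fintype A] [Fintype B] {P : B → ℝ} (hP : IsPMF P) (pj : B → A)
    (Ms Mp : ℕ) (x0 : Fin Ms × Fin Mp) (β1 β2 : ℝ) (hβ1 : 0 ≤ β1) (hβ2 : 0 ≤ β2) :
    ∃ (N : Type) (_ : Fintype N) (w : N → ℝ) (a : N → Fin Ms → A)
      (b : N → Fin Ms × Fin Mp → B) (bad : N → Fin Ms × Fin Mp → ℝ), IsPMF w ∧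
      (∀ x (F : B → ℝ), ∑ ν, w ν * F (b ν x) = ∑ u, P u * F u) ∧
      (∀ x, ∑ ν, w ν * bad ν x ≤
        (∑ u, P u * if pr P pj (pj u) ≤ β1 then 0 else 1) + ((Ms : ℝ) - 1) * β1
        + ((∑ u, P u * if P u / pr P pj (pj u) ≤ β2 then 0 else 1) + ((Mp : ℝ) - 1) * β2)) ∧
      (∀ ν x, 0 ≤ bad ν x) ∧
      (∀ ν, ∃ dec : B → Fin Ms × Fin Mp, ∀ x, bad ν x < 1 →
        dec (b ν x) = x ∧ pj (b ν x) = a ν x.1) := by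
  set W : A × (Fin Mp → B) → ℝ := fun c => pr P pj c.1 * ∏ p, condK P pj c.1 (c.2 p) with hWdef
  have hK := condK_pmf hP pj
  have hsum : ∀ G : A → (Fin Mp → B) → ℝ, ∑ c : A × (Fin Mp → B), W c * G c.1 c.2
      = ∑ a, pr P pj a * ∑ f : Fin Mp → B, (∏ p, condK P pj a (f p)) * G a f := by
    intro G
    rw [Fintype.sum_prod_type]
    simp only [hWdef, Finset.mul_sum, mul_assoc]
  have hW : IsPMF W := by
    constructor
    · intro c
      exact mul_nonneg (pr_nonneg hP.1 _ _) ((hK c.1).pi.1 c.2)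
    · have := hsum (fun _ _ => 1)
      simp only [mul_one] at this
      rw [this]
      simp only [(hK _).pi.2, mul_one]
      exact sum_pr hP pj
  have hprW : ∀ a, pr W Prod.fst a = pr P pj a := by
    intro a0
    have h1 := hsum (fun a _ => if a = a0 then 1 else 0)
    simp only [mul_ite, mul_one, mul_zero] at h1
    have h2 : ∀ a, (∑ f : Fin Mp → B, if a = a0 then ∏ p, condK P pj a (f p) else 0)
        = if a = a0 then 1 else 0 := by
      intro a
      split_ifs
      · exact (hK a).pi.2
      · simp
    simp only [h2] at h1
    unfold pr at h1 ⊢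
    rw [h1]
    simp
  have hm : ∀ p (F : A → B → ℝ), ∑ c : A × (Fin Mp → B), W c * F c.1 (c.2 p)
      = ∑ u, P u * F (pj u) u := by
    intro p F
    rw [hsum (fun a f => F a (f p))]
    rw [← sum_condK hP pj F]
    refine Finset.sum_congr rfl fun a _ => ?_
    rw [marg1 (hK a) p (F a)]
  let bad1 : (Fin Ms → A × (Fin Mp → B)) → Fin Ms × Fin Mp → ℝ := fun ν x =>
    if pj ((ν x.1).2 x.2) ≠ (ν x.1).1 then 1 else 0
  let bad2 : (Fin Ms → A × (Fin Mp → B)) → Fin Ms × Fin Mp → ℝ := fun ν x =>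
    if ∃ k, k ≠ x.1 ∧ (ν k).1 = (ν x.1).1 then 1 else 0
  let bad3 : (Fin Ms → A × (Fin Mp → B)) → Fin Ms × Fin Mp → ℝ := fun ν x =>
    if ∃ k, k ≠ x.2 ∧ (ν x.1).2 k = (ν x.1).2 x.2 then 1 else 0
  have hb1 : ∀ ν x, 0 ≤ bad1 ν x := by intro ν x; dsimp only [bad1]; split_ifs <;> norm_num
  have hb2 : ∀ ν x, 0 ≤ bad2 ν x := by intro ν x; dsimp only [bad2]; split_ifs <;> norm_num
  have hb3 : ∀ ν x, 0 ≤ bad3 ν x := by intro ν x; dsimp only [bad3]; split_ifs <;> norm_num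
  refine ⟨Fin Ms → A × (Fin Mp → B), inferInstance, fun ν => ∏ s, W (ν s),
    fun ν s => (ν s).1, fun ν x => (ν x.1).2 x.2, fun ν x => bad1 ν x + (bad2 ν x + bad3 ν x),
    hW.pi, ?_, ?_, ?_, ?_⟩
  · intro x F
    rw [marg1 hW x.1 (fun c => F (c.2 x.2))]
    exact hm x.2 (fun _ b => F b)
  · intro x
    simp only [mul_add, Finset.sum_add_distrib]
    have e1 : ∑ ν : Fin Ms → A × (Fin Mp → B), (∏ s, W (ν s)) * bad1 ν x = 0 := by
      rw [marg1 hW x.1 (fun c => if pj (c.2 x.2) ≠ c.1 then (1 : ℝ) else 0)]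
      rw [hm x.2 (fun a b => if pj b ≠ a then (1 : ℝ) else 0)]
      simp
    have e2 : ∑ ν : Fin Ms → A × (Fin Mp → B), (∏ s, W (ν s)) * bad2 ν x ≤
        (∑ u, P u * if pr P pj (pj u) ≤ β1 then 0 else 1) + ((Ms : ℝ) - 1) * β1 := by
      refine (collision hW Prod.fst β1 hβ1 x.1).trans (le_of_eq ?_)
      congr 1
      simp only [hprW]
      rw [hm x.2 (fun a _ => if pr P pj a ≤ β1 then (0 : ℝ) else 1)]
    have e3 : ∑ ν : Fin Ms → A × (Fin Mp → B), (∏ s, W (ν s)) * bad3 ν x ≤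
        (∑ u, P u * if P u / pr P pj (pj u) ≤ β2 then 0 else 1) + ((Mp : ℝ) - 1) * β2 := by
      rw [marg1 hW x.1 (fun c => if ∃ k, k ≠ x.2 ∧ c.2 k = c.2 x.2 then (1 : ℝ) else 0)]
      rw [hsum (fun _ f => if ∃ k, k ≠ x.2 ∧ f k = f x.2 then (1 : ℝ) else 0)]
      have h1 : ∀ a, ∑ f : Fin Mp → B, (∏ p, condK P pj a (f p)) *
          (if ∃ k, k ≠ x.2 ∧ f k = f x.2 then (1 : ℝ) else 0) ≤
          (∑ b, condK P pj a b * if condK P pj a b ≤ β2 then 0 else 1) + ((Mp : ℝ) - 1) * β2 := by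
        intro a
        have hid : ∀ b, pr (condK P pj a) id b = condK P pj a b := by
          intro b; simp [pr]
        have := collision (hK a) id β2 hβ2 x.2
        simpa only [hid, id] using this
      refine (Finset.sum_le_sum fun a _ =>
        mul_le_mul_of_nonneg_left (h1 a) (pr_nonneg hP.1 _ _)).trans (le_of_eq ?_)
      simp only [mul_add, Finset.sum_add_distrib]
      rw [sum_condK hP pj (fun a b => if condK P pj a b ≤ β2 then (0 : ℝ) else 1)]
      rw [← Finset.sum_mul, sum_pr hP, one_mul]
      congr 1
      refine Finset.sum_congr rfl fun u _ => ?_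
      by_cases h0 : pr P pj (pj u) = 0
      · have := le_pr hP.1 pj u
        rw [h0] at this
        rw [le_antisymm this (hP.1 u)]
        simp
      · simp [condK, h0]
    linarith
  · intro ν x
    exact add_nonneg (hb1 ν x) (add_nonneg (hb2 ν x) (hb3 ν x))
  · intro ν
    have key : ∃ dec : B → Fin Ms × Fin Mp, ∀ x, (pj ((ν x.1).2 x.2) = (ν x.1).1) →
        (∀ k, (ν k).1 = (ν x.1).1 → k = x.1) →
        (∀ k, (ν x.1).2 k = (ν x.1).2 x.2 → k = x.2) → dec ((ν x.1).2 x.2) = x := by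
      refine ⟨fun u => if h : ∃ x : Fin Ms × Fin Mp, (ν x.1).1 = pj u ∧ (ν x.1).2 x.2 = u
        then h.choose else x0, ?_⟩
      intro x h1 h2 h3
      have hex : ∃ x' : Fin Ms × Fin Mp, (ν x'.1).1 = pj ((ν x.1).2 x.2)
          ∧ (ν x'.1).2 x'.2 = (ν x.1).2 x.2 := ⟨x, h1.symm, rfl⟩
      dsimp only
      rw [dif_pos hex]
      have hs := hex.choose_spec
      have hs1 := h2 _ (hs.1.trans h1)
      have hs2 := hs.2
      rw [hs1] at hs2
      exact Prod.ext hs1 (h3 _ hs2)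
    obtain ⟨dec, hdec⟩ := key
    refine ⟨dec, fun x hx => ?_⟩
    have h1 : bad1 ν x < 1 := by linarith [hb2 ν x, hb3 ν x]
    have h2 : bad2 ν x < 1 := by linarith [hb1 ν x, hb3 ν x]
    have h3 : bad3 ν x < 1 := by linarith [hb1 ν x, hb2 ν x]
    have h1' : pj ((ν x.1).2 x.2) = (ν x.1).1 := by
      by_contra hc
      simp [bad1, hc] at h1
    refine ⟨hdec x h1' ?_ ?_, h1'⟩
    · intro k hk
      by_contra hc
      dsimp only [bad2] at h2
      rw [if_pos ⟨k, hc, hk⟩] at h2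
      exact lt_irrefl _ h2
    · intro k hk
      by_contra hc
      dsimp only [bad3] at h3
      rw [if_pos ⟨k, hc, hk⟩] at h3
      exact lt_irrefl _ h3

/-- Probability, under `Q`, that `good` fails. -/
noncomputable def errY {Y : Type} [Fintype Y] (Q : Y → ℝ) (good : Y → Prop) : ℝ :=
  ∑ y, Q y * if good y then 0 else 1

lemma errY_nonneg {Y : Type} [Fintype Y] {Q : Y → ℝ} (hQ : IsPMF Q) (good : Y → Prop) :
    0 ≤ errY Q good :=
  Finset.sum_nonneg fun y _ => mul_nonneg (hQ.1 y) (by split_ifs <;> norm_num)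

lemma errY_le_one {Y : Type} [Fintype Y] {Q : Y → ℝ} (hQ : IsPMF Q) (good : Y → Prop) :
    errY Q good ≤ 1 := by
  rw [← hQ.2]
  refine Finset.sum_le_sum fun y _ => ?_
  split_ifs
  · simpa using hQ.1 y
  · simp

lemma errY_mono {Y : Type} [Fintype Y] {Q : Y → ℝ} (hQ : IsPMF Q) (good good' : Y → Prop)
    (h : ∀ y, good y → good' y) : errY Q good' ≤ errY Q good := by
  refine Finset.sum_le_sum fun y _ => mul_le_mul_of_nonneg_left ?_ (hQ.1 y)
  by_cases h1 : good y
  · rw [if_pos h1, if_pos (h y h1)]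
  · rw [if_neg h1]
    split_ifs <;> norm_num

lemma chn_pmf {ch : X1 × X2 → Y1 × Y2 → ℝ} (hch : IsKernel ch) (n : ℕ) (x1 : Fin n → X1)
    (x2 : Fin n → X2) : IsPMF (fun y : Fin n → Y1 × Y2 => ∏ i, ch (x1 i, x2 i) (y i)) := by
  refine ⟨fun y => Finset.prod_nonneg fun i _ => (hch _).1 _, ?_⟩
  rw [sum_prod_pi (fun i y => ch (x1 i, x2 i) y)]
  simp [(hch _).2]

lemma PerrMsg_eq (ch : X1 × X2 → Y1 × Y2 → ℝ) (n M1s M1p M2s M2p : ℕ)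
    (f1 : Fin M1s × Fin M1p → Fin n → X1) (f2 : Fin M2s × Fin M2p → Fin n → X2)
    (g1 : (Fin n → Y1) → Fin M2s → Fin M1s × Fin M1p)
    (g2 : (Fin n → Y2) → Fin M1s → Fin M2s × Fin M2p) :
    PerrMsg ch n M1s M1p M2s M2p f1 f2 g1 g2 = (1 / ((M1s : ℝ) * M1p * M2s * M2p)) *
      ∑ w1 : Fin M1s × Fin M1p, ∑ w2 : Fin M2s × Fin M2p,
        errY (fun y : Fin n → Y1 × Y2 => ∏ i, ch (f1 w1 i, f2 w2 i) (y i))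
          (fun y => g1 (fun i => (y i).1) w2.1 = w1 ∧ g2 (fun i => (y i).2) w1.1 = w2) := by
  unfold PerrMsg errY
  congr! 10

lemma PerrDet_eq (ch : X1 × X2 → Y1 × Y2 → ℝ)
    (pU1 : U1 → ℝ) (h1 : U1 → V1) (pU2 : U2 → ℝ) (h2 : U2 → V2) (n : ℕ)
    (f1 : (Fin n → U1) → Fin n → X1) (f2 : (Fin n → U2) → Fin n → X2)
    (g1 : (Fin n → Y1) → (Fin n → V2) → Fin n → U1)
    (g2 : (Fin n → Y2) → (Fin n → V1) → Fin n → U2) :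
    PerrDet ch pU1 h1 pU2 h2 n f1 f2 g1 g2 =
    ∑ u1 : Fin n → U1, (∏ i, pU1 (u1 i)) * ∑ u2 : Fin n → U2, (∏ i, pU2 (u2 i)) *
      errY (fun y : Fin n → Y1 × Y2 => ∏ i, ch (f1 u1 i, f2 u2 i) (y i))
        (fun y => g1 (fun i => (y i).1) (fun i => h2 (u2 i)) = u1 ∧
          g2 (fun i => (y i).2) (fun i => h1 (u1 i)) = u2) := by
  unfold PerrDet errY
  simp only [Finset.mul_sum]
  refine Finset.sum_congr rfl fun u1 _ => Finset.sum_congr rfl fun u2 _ =>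
    Finset.sum_congr rfl fun y _ => ?_
  simp only [mul_assoc]
  congr! 5

/-- Upper bound for the codebook failure probability of one user. -/
noncomputable def etaBound {U V : Type} [Fintype U] (p : U → ℝ) (h : U → V) (Ms Mp n : ℕ)
    (β1 β2 : ℝ) : ℝ :=
  (∑ u : Fin n → U, (∏ i, p (u i)) *
      if pr (fun u : Fin n → U => ∏ i, p (u i)) (fun u i => h (u i)) (fun i => h (u i)) ≤ β1
        then 0 else 1) + ((Ms : ℝ) - 1) * β1
    + ((∑ u : Fin n → U, (∏ i, p (u i)) *
      if (∏ i, p (u i)) /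
        pr (fun u : Fin n → U => ∏ i, p (u i)) (fun u i => h (u i)) (fun i => h (u i)) ≤ β2
        then 0 else 1) + ((Mp : ℝ) - 1) * β2)

lemma converse_oneshot (ch : X1 × X2 → Y1 × Y2 → ℝ)
    (pU1 : U1 → ℝ) (h1 : U1 → V1) (pU2 : U2 → ℝ) (h2 : U2 → V2)
    (hch : IsKernel ch) (hpU1 : IsPMF pU1) (hpU2 : IsPMF pU2) (n : ℕ)
    (f1 : (Fin n → U1) → Fin n → X1) (f2 : (Fin n → U2) → Fin n → X2)
    (g1 : (Fin n → Y1) → (Fin n → V2) → Fin n → U1)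
    (g2 : (Fin n → Y2) → (Fin n → V1) → Fin n → U2)
    (M1s M1p M2s M2p : ℕ) (hM1s : 0 < M1s) (hM1p : 0 < M1p) (hM2s : 0 < M2s) (hM2p : 0 < M2p)
    (β1s β1p β2s β2p : ℝ) (hβ1s : 0 ≤ β1s) (hβ1p : 0 ≤ β1p) (hβ2s : 0 ≤ β2s) (hβ2p : 0 ≤ β2p) :
    ∃ (f1' : Fin M1s × Fin M1p → Fin n → X1) (f2' : Fin M2s × Fin M2p → Fin n → X2)
    (g1' : (Fin n → Y1) → Fin M2s → Fin M1s × Fin M1p)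
    (g2' : (Fin n → Y2) → Fin M1s → Fin M2s × Fin M2p),
    PerrMsg ch n M1s M1p M2s M2p f1' f2' g1' g2' ≤ PerrDet ch pU1 h1 pU2 h2 n f1 f2 g1 g2
      + etaBound pU1 h1 M1s M1p n β1s β1p + etaBound pU2 h2 M2s M2p n β2s β2p := by
  obtain ⟨N1, _, w1, a1, b1, bad1, hw1, hmarg1, hbad1, hnn1, hdec1⟩ :=
    single_user (hpU1.pi (ι := Fin n)) (fun u i => h1 (u i)) M1s M1p (⟨0, hM1s⟩, ⟨0, hM1p⟩)
      β1s β1p hβ1s hβ1p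
  obtain ⟨N2, _, w2, a2, b2, bad2, hw2, hmarg2, hbad2, hnn2, hdec2⟩ :=
    single_user (hpU2.pi (ι := Fin n)) (fun u i => h2 (u i)) M2s M2p (⟨0, hM2s⟩, ⟨0, hM2p⟩)
      β2s β2p hβ2s hβ2p
  choose dec1 hdec1 using hdec1
  choose dec2 hdec2 using hdec2
  set η1 := etaBound pU1 h1 M1s M1p n β1s β1p with hη1
  set η2 := etaBound pU2 h2 M2s M2p n β2s β2p with hη2
  let e : (Fin n → U1) → (Fin n → U2) → ℝ := fun u1 u2 =>
    errY (fun y : Fin n → Y1 × Y2 => ∏ i, ch (f1 u1 i, f2 u2 i) (y i))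
        (fun y => g1 (fun i => (y i).1) (fun i => h2 (u2 i)) = u1 ∧
          g2 (fun i => (y i).2) (fun i => h1 (u1 i)) = u2)
  have hDet : PerrDet ch pU1 h1 pU2 h2 n f1 f2 g1 g2 =
    ∑ u1 : Fin n → U1, (∏ i, pU1 (u1 i)) * ∑ u2 : Fin n → U2, (∏ i, pU2 (u2 i)) * e u1 u2 :=
    PerrDet_eq ch pU1 h1 pU2 h2 n f1 f2 g1 g2
  rw [hDet]
  set D := ∑ u1 : Fin n → U1, (∏ i, pU1 (u1 i)) * ∑ u2 : Fin n → U2, (∏ i, pU2 (u2 i)) * e u1 u2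
  let E : N1 → N2 → Fin M1s × Fin M1p → Fin M2s × Fin M2p → ℝ := fun ν1 ν2 x1 x2 =>
    errY (fun y : Fin n → Y1 × Y2 => ∏ i, ch (f1 (b1 ν1 x1) i, f2 (b2 ν2 x2) i) (y i))
      (fun y => dec1 ν1 (g1 (fun i => (y i).1) (a2 ν2 x2.1)) = x1 ∧
        dec2 ν2 (g2 (fun i => (y i).2) (a1 ν1 x1.1)) = x2)
  have hE : ∀ ν1 ν2 x1 x2, E ν1 ν2 x1 x2 ≤ e (b1 ν1 x1) (b2 ν2 x2) + bad1 ν1 x1 + bad2 ν2 x2 := by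
    intro ν1 ν2 x1 x2
    have hQ := chn_pmf hch n (f1 (b1 ν1 x1)) (f2 (b2 ν2 x2))
    have he : 0 ≤ e (b1 ν1 x1) (b2 ν2 x2) := errY_nonneg hQ _
    have hE1 : E ν1 ν2 x1 x2 ≤ 1 := errY_le_one hQ _
    have hn1 := hnn1 ν1 x1
    have hn2 := hnn2 ν2 x2
    by_cases hb1 : bad1 ν1 x1 < 1
    · by_cases hb2 : bad2 ν2 x2 < 1
      · obtain ⟨hd1, hp1⟩ := hdec1 ν1 x1 hb1
        obtain ⟨hd2, hp2⟩ := hdec2 ν2 x2 hb2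
        have : E ν1 ν2 x1 x2 ≤ e (b1 ν1 x1) (b2 ν2 x2) := by
          refine errY_mono hQ _ _ ?_
          intro y hy
          rw [hp1, hp2] at hy
          rw [hy.1, hy.2]
          exact ⟨hd1, hd2⟩
        linarith
      · linarith
    · linarith
  let c : ℝ := 1 / ((M1s : ℝ) * M1p * M2s * M2p)
  have hc : 0 ≤ c := by positivity
  have hccard : c * ∑ _x1 : Fin M1s × Fin M1p, ∑ _x2 : Fin M2s × Fin M2p, (D + η1 + η2)
      = D + η1 + η2 := by
    have : (M1s : ℝ) ≠ 0 := by positivity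
    have : (M1p : ℝ) ≠ 0 := by positivity
    have : (M2s : ℝ) ≠ 0 := by positivity
    have : (M2p : ℝ) ≠ 0 := by positivity
    simp only [Finset.sum_const, Finset.card_univ, Fintype.card_prod, Fintype.card_fin,
      nsmul_eq_mul, Nat.cast_mul, c]
    field_simp
  have hw : IsPMF (fun ν : N1 × N2 => w1 ν.1 * w2 ν.2) := by
    refine ⟨fun ν => mul_nonneg (hw1.1 _) (hw2.1 _), ?_⟩
    rw [Fintype.sum_prod_type]
    simp only [← Finset.mul_sum, hw2.2, mul_one, hw1.2]
  have hterm : ∀ x1 x2, ∑ ν : N1 × N2, w1 ν.1 * w2 ν.2 * E ν.1 ν.2 x1 x2 ≤ D + η1 + η2 := by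
    intro x1 x2
    refine (Finset.sum_le_sum fun ν _ => mul_le_mul_of_nonneg_left (hE ν.1 ν.2 x1 x2)
      (hw.1 ν)).trans ?_
    rw [Fintype.sum_prod_type]
    have s1 : ∑ ν1, ∑ ν2, w1 ν1 * w2 ν2 * e (b1 ν1 x1) (b2 ν2 x2) = D := by
      simp only [mul_assoc, ← Finset.mul_sum]
      have : ∀ u1, ∑ ν2, w2 ν2 * e u1 (b2 ν2 x2)
          = ∑ u2 : Fin n → U2, (∏ i, pU2 (u2 i)) * e u1 u2 := fun u1 => hmarg2 x2 (e u1)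
      simp only [this]
      exact hmarg1 x1 (fun u1 => ∑ u2 : Fin n → U2, (∏ i, pU2 (u2 i)) * e u1 u2)
    have s2 : ∑ ν1, ∑ ν2, w1 ν1 * w2 ν2 * bad1 ν1 x1 ≤ η1 := by
      have : ∀ ν1 ν2, w1 ν1 * w2 ν2 * bad1 ν1 x1 = (w1 ν1 * bad1 ν1 x1) * w2 ν2 := by
        intros; ring
      simp only [this, ← Finset.mul_sum, hw2.2, mul_one]
      exact hbad1 x1
    have s3 : ∑ ν1, ∑ ν2, w1 ν1 * w2 ν2 * bad2 ν2 x2 ≤ η2 := by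
      simp only [mul_assoc, ← Finset.mul_sum, ← Finset.sum_mul, hw1.2, one_mul]
      exact hbad2 x2
    simp only [mul_add, Finset.sum_add_distrib]
    linarith
  obtain ⟨ν, hν⟩ := exists_le_of_avg hw (fun ν => c * ∑ x1, ∑ x2, E ν.1 ν.2 x1 x2)
    (D + η1 + η2) (by
      rw [← hccard]
      have : ∀ ν : N1 × N2, w1 ν.1 * w2 ν.2 * (c * ∑ x1, ∑ x2, E ν.1 ν.2 x1 x2)
          = c * ∑ x1, ∑ x2, w1 ν.1 * w2 ν.2 * E ν.1 ν.2 x1 x2 := by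
        intro ν
        simp only [← Finset.mul_sum]
        ring
      simp only [this]
      rw [← Finset.mul_sum]
      refine mul_le_mul_of_nonneg_left ?_ hc
      rw [Finset.sum_comm]
      refine Finset.sum_le_sum fun x1 _ => ?_
      rw [Finset.sum_comm]
      exact Finset.sum_le_sum fun x2 _ => hterm x1 x2)
  refine ⟨fun x => f1 (b1 ν.1 x), fun x => f2 (b2 ν.2 x),
    fun y s => dec1 ν.1 (g1 y (a2 ν.2 s)), fun y s => dec2 ν.2 (g2 y (a1 ν.1 s)), ?_⟩
  rw [PerrMsg_eq]
  exact hν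

lemma forward_oneshot (ch : X1 × X2 → Y1 × Y2 → ℝ)
    (pU1 : U1 → ℝ) (h1 : U1 → V1) (pU2 : U2 → ℝ) (h2 : U2 → V2)
    (hch : IsKernel ch) (hpU1 : IsPMF pU1) (hpU2 : IsPMF pU2) (n : ℕ)
    (M1s M1p M2s M2p : ℕ) [NeZero M1s] [NeZero M1p] [NeZero M2s] [NeZero M2p]
    (f1 : Fin M1s × Fin M1p → Fin n → X1) (f2 : Fin M2s × Fin M2p → Fin n → X2)
    (g1 : (Fin n → Y1) → Fin M2s → Fin M1s × Fin M1p)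
    (g2 : (Fin n → Y2) → Fin M1s → Fin M2s × Fin M2p)
    (T1 : Set (Fin n → U1)) (T2 : Set (Fin n → U2))
    (k1s : (Fin n → V1) → Fin M1s) (k1p : (Fin n → U1) → Fin M1p)
    (k2s : (Fin n → V2) → Fin M2s) (k2p : (Fin n → U2) → Fin M2p)
    (hk1 : Set.InjOn (fun u => (k1s (fun i => h1 (u i)), k1p u)) T1)
    (hk2 : Set.InjOn (fun u => (k2s (fun i => h2 (u i)), k2p u)) T2) :
    ∃ (f1' : (Fin n → U1) → Fin n → X1) (f2' : (Fin n → U2) → Fin n → X2)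
    (g1' : (Fin n → Y1) → (Fin n → V2) → Fin n → U1)
    (g2' : (Fin n → Y2) → (Fin n → V1) → Fin n → U2),
    PerrDet ch pU1 h1 pU2 h2 n f1' f2' g1' g2' ≤ PerrMsg ch n M1s M1p M2s M2p f1 f2 g1 g2
      + (∑ u : Fin n → U1, (∏ i, pU1 (u i)) * if u ∈ T1 then 0 else 1)
      + (∑ u : Fin n → U2, (∏ i, pU2 (u i)) * if u ∈ T2 then 0 else 1) := by
  have hP1 := hpU1.pi (ι := Fin n)
  have hP2 := hpU2.pi (ι := Fin n)
  have hne1 := hP1.nonempty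
  have hne2 := hP2.nonempty
  set enc1 : (Fin n → U1) → Fin M1s × Fin M1p := fun u => (k1s (fun i => h1 (u i)), k1p u)
    with henc1
  set enc2 : (Fin n → U2) → Fin M2s × Fin M2p := fun u => (k2s (fun i => h2 (u i)), k2p u)
    with henc2
  let d1 := Function.invFunOn enc1 T1
  let d2 := Function.invFunOn enc2 T2
  have hd1 : ∀ u ∈ T1, d1 (enc1 u) = u := fun u hu => hk1.leftInvOn_invFunOn hu
  have hd2 : ∀ u ∈ T2, d2 (enc2 u) = u := fun u hu => hk2.leftInvOn_invFunOn hu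
  rw [PerrMsg_eq]
  let E : Fin M1s × Fin M1p → Fin M2s × Fin M2p → ℝ := fun w1 w2 =>
    errY (fun y : Fin n → Y1 × Y2 => ∏ i, ch (f1 w1 i, f2 w2 i) (y i))
      (fun y => g1 (fun i => (y i).1) w2.1 = w1 ∧ g2 (fun i => (y i).2) w1.1 = w2)
  let c : ℝ := 1 / ((M1s : ℝ) * M1p * M2s * M2p)
  have hc : 0 ≤ c := by positivity
  let S := (Fin M1s × Fin M1p) × (Fin M2s × Fin M2p)
  let F1 : S → (Fin n → U1) → Fin n → X1 := fun s u => f1 (enc1 u + s.1)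
  let F2 : S → (Fin n → U2) → Fin n → X2 := fun s u => f2 (enc2 u + s.2)
  let G1 : S → (Fin n → Y1) → (Fin n → V2) → Fin n → U1 := fun s y v =>
    d1 (g1 y (k2s v + s.2.1) - s.1)
  let G2 : S → (Fin n → Y2) → (Fin n → V1) → Fin n → U2 := fun s y v =>
    d2 (g2 y (k1s v + s.1.1) - s.2)
  let t1 : (Fin n → U1) → ℝ := fun u => if u ∈ T1 then 0 else 1
  let t2 : (Fin n → U2) → ℝ := fun u => if u ∈ T2 then 0 else 1
  have ht1 : ∀ u, 0 ≤ t1 u := by intro u; dsimp only [t1]; split_ifs <;> norm_num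
  have ht2 : ∀ u, 0 ≤ t2 u := by intro u; dsimp only [t2]; split_ifs <;> norm_num
  let e : S → (Fin n → U1) → (Fin n → U2) → ℝ := fun s u1 u2 =>
    errY (fun y : Fin n → Y1 × Y2 => ∏ i, ch (F1 s u1 i, F2 s u2 i) (y i))
        (fun y => G1 s (fun i => (y i).1) (fun i => h2 (u2 i)) = u1 ∧
          G2 s (fun i => (y i).2) (fun i => h1 (u1 i)) = u2)
  have he : ∀ s u1 u2, e s u1 u2 ≤ E (enc1 u1 + s.1) (enc2 u2 + s.2) + t1 u1 + t2 u2 := by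
    intro s u1 u2
    have hQ := chn_pmf hch n (F1 s u1) (F2 s u2)
    have he0 : 0 ≤ E (enc1 u1 + s.1) (enc2 u2 + s.2) := errY_nonneg hQ _
    have he1 : e s u1 u2 ≤ 1 := errY_le_one hQ _
    have a1 := ht1 u1
    have a2 := ht2 u2
    by_cases hu1 : u1 ∈ T1
    · by_cases hu2 : u2 ∈ T2
      · have : e s u1 u2 ≤ E (enc1 u1 + s.1) (enc2 u2 + s.2) := by
          refine errY_mono hQ _ _ ?_
          intro y hy
          have y1 : g1 (fun i => (y i).1) (k2s (fun i => h2 (u2 i)) + s.2.1) = enc1 u1 + s.1 :=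
            hy.1
          have y2 : g2 (fun i => (y i).2) (k1s (fun i => h1 (u1 i)) + s.1.1) = enc2 u2 + s.2 :=
            hy.2
          constructor
          · show d1 (g1 _ (k2s (fun i => h2 (u2 i)) + s.2.1) - s.1) = u1
            rw [y1, add_sub_cancel_right, hd1 u1 hu1]
          · show d2 (g2 _ (k1s (fun i => h1 (u1 i)) + s.1.1) - s.2) = u2
            rw [y2, add_sub_cancel_right, hd2 u2 hu2]
        linarith
      · have : t2 u2 = 1 := if_neg hu2
        linarith
    · have : t1 u1 = 1 := if_neg hu1
      linarith
  have hcS : ∑ _s : S, c = 1 := by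
    have : (M1s : ℝ) ≠ 0 := NeZero.ne _
    have : (M1p : ℝ) ≠ 0 := NeZero.ne _
    have : (M2s : ℝ) ≠ 0 := NeZero.ne _
    have : (M2p : ℝ) ≠ 0 := NeZero.ne _
    simp only [Finset.sum_const, Finset.card_univ, S, Fintype.card_prod, Fintype.card_fin,
      nsmul_eq_mul, Nat.cast_mul, c]
    field_simp
  have hshift : ∀ x1 x2, ∑ s : S, E (x1 + s.1) (x2 + s.2) = ∑ w1, ∑ w2, E w1 w2 := by
    intro x1 x2
    rw [Fintype.sum_prod_type]
    rw [← Equiv.sum_comp (Equiv.addLeft x1) (fun w1 => ∑ w2, E w1 w2)]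
    refine Finset.sum_congr rfl fun s1 _ => ?_
    exact Equiv.sum_comp (Equiv.addLeft x2) (fun w2 => E (x1 + s1) w2)
  set A := c * ∑ w1, ∑ w2, E w1 w2 with hA
  set τ1 := ∑ u : Fin n → U1, (∏ i, pU1 (u i)) * t1 u with hτ1
  set τ2 := ∑ u : Fin n → U2, (∏ i, pU2 (u i)) * t2 u with hτ2
  have hpair : ∀ u1 u2, ∑ s : S, c * e s u1 u2 ≤ A + t1 u1 + t2 u2 := by
    intro u1 u2
    refine (Finset.sum_le_sum fun s _ => mul_le_mul_of_nonneg_left (he s u1 u2) hc).trans ?_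
    simp only [mul_add, Finset.sum_add_distrib, ← Finset.sum_mul, hcS, one_mul]
    rw [← Finset.mul_sum, hshift]
  obtain ⟨s, hs⟩ := exists_le_of_avg (p := fun _ : S => c) ⟨fun _ => hc, hcS⟩
    (fun s => ∑ u1 : Fin n → U1, (∏ i, pU1 (u1 i)) *
      ∑ u2 : Fin n → U2, (∏ i, pU2 (u2 i)) * e s u1 u2) (A + τ1 + τ2) (by
      have : ∑ s : S, c * ∑ u1 : Fin n → U1, (∏ i, pU1 (u1 i)) *
          ∑ u2 : Fin n → U2, (∏ i, pU2 (u2 i)) * e s u1 u2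
          = ∑ u1 : Fin n → U1, (∏ i, pU1 (u1 i)) *
          ∑ u2 : Fin n → U2, (∏ i, pU2 (u2 i)) * ∑ s : S, c * e s u1 u2 := by
        simp only [Finset.mul_sum]
        rw [Finset.sum_comm]
        refine Finset.sum_congr rfl fun u1 _ => ?_
        rw [Finset.sum_comm]
        refine Finset.sum_congr rfl fun u2 _ => ?_
        refine Finset.sum_congr rfl fun s _ => ?_
        ring
      rw [this]
      have hb : ∑ u1 : Fin n → U1, (∏ i, pU1 (u1 i)) *
          ∑ u2 : Fin n → U2, (∏ i, pU2 (u2 i)) * (A + t1 u1 + t2 u2) = A + τ1 + τ2 := by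
        simp only [mul_add, Finset.sum_add_distrib, ← Finset.sum_mul, hP2.2, hP1.2, one_mul]
        rfl
      rw [← hb]
      refine Finset.sum_le_sum fun u1 _ => mul_le_mul_of_nonneg_left ?_ (hP1.1 u1)
      exact Finset.sum_le_sum fun u2 _ => mul_le_mul_of_nonneg_left (hpair u1 u2) (hP2.1 u2))
  refine ⟨F1 s, F2 s, G1 s, G2 s, ?_⟩
  rw [PerrDet_eq]
  exact hs

lemma second_moment {U : Type} [Fintype U] {p : U → ℝ} (hp : IsPMF p) (X : U → ℝ)
    (hX : ∑ u, p u * X u = 0) (n : ℕ) :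
    (∑ u : Fin n → U, (∏ i, p (u i)) * (∑ i, X (u i)) = 0) ∧
    (∑ u : Fin n → U, (∏ i, p (u i)) * (∑ i, X (u i)) ^ 2 = n * ∑ u, p u * X u ^ 2) := by
  have hm : ∀ i : Fin n, ∑ u : Fin n → U, (∏ i, p (u i)) * X (u i) = 0 := fun i => by
    rw [marg1 hp i X, hX]
  constructor
  · simp only [Finset.mul_sum]
    rw [Finset.sum_comm]
    exact Finset.sum_eq_zero fun i _ => hm i
  · simp only [sq, Finset.sum_mul_sum]
    simp only [Finset.mul_sum]
    rw [Finset.sum_comm]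
    have : ∀ i : Fin n, ∑ u : Fin n → U, ∑ j : Fin n, (∏ i, p (u i)) * (X (u i) * X (u j))
        = ∑ a, p a * (X a * X a) := by
      intro i
      rw [Finset.sum_comm, Finset.sum_eq_single i]
      · exact marg1 hp i (fun a => X a * X a)
      · intro j _ hj
        rw [marg2 hp i j hj.symm X X, hX, zero_mul]
      · simp
    simp only [this]
    simp [Finset.mul_sum]

lemma lln {U : Type} [Fintype U] {p : U → ℝ} (hp : IsPMF p) (X : U → ℝ) (μ : ℝ)
    (hμ : ∑ u, p u * X u = μ) (ε : ℝ) (hε : 0 < ε) :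
    Tendsto (fun n : ℕ => ∑ u : Fin n → U, (∏ i, p (u i)) *
      if |(∑ i, X (u i)) - n * μ| ≤ n * ε then (0 : ℝ) else 1) atTop (nhds 0) := by
  set Z : U → ℝ := fun u => X u - μ with hZ
  have hZ0 : ∑ u, p u * Z u = 0 := by
    simp only [hZ, mul_sub, Finset.sum_sub_distrib, ← Finset.sum_mul, hp.2, hμ]
    ring
  set σ := ∑ u, p u * Z u ^ 2 with hσ
  have hlim : Tendsto (fun n : ℕ => (σ / ε ^ 2) / (n : ℝ)) atTop (nhds 0) :=
    tendsto_const_div_atTop_nhds_zero_nat _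
  refine tendsto_of_tendsto_of_tendsto_of_le_of_le' tendsto_const_nhds hlim ?_ ?_
  · refine Eventually.of_forall fun n => Finset.sum_nonneg fun u _ =>
      mul_nonneg (hp.pi.1 u) (by split_ifs <;> norm_num)
  · filter_upwards [eventually_gt_atTop 0] with n hn
    have hn' : (0 : ℝ) < n := by exact_mod_cast hn
    have h2 := (second_moment hp Z hZ0 n).2
    have hb : ∀ u : Fin n → U, (if |(∑ i, X (u i)) - n * μ| ≤ n * ε then (0 : ℝ) else 1)
        ≤ (∑ i, Z (u i)) ^ 2 / (n * ε) ^ 2 := by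
      intro u
      have hs : (∑ i, X (u i)) - n * μ = ∑ i, Z (u i) := by
        simp [hZ, Finset.sum_sub_distrib]
      rw [hs]
      split_ifs with h
      · positivity
      · rw [one_le_div (by positivity), ← sq_abs (∑ i, Z (u i))]
        push Not at h
        exact pow_le_pow_left₀ (by positivity) h.le 2
    refine (Finset.sum_le_sum fun u _ => mul_le_mul_of_nonneg_left (hb u) (hp.pi.1 u)).trans ?_
    simp only [← mul_div_assoc]
    rw [← Finset.sum_div, h2]
    rw [← hσ]
    apply le_of_eq
    field_simp

/-- AEP for products of a positive function. -/
lemma aep {U : Type} [Fintype U] {p : U → ℝ} (hp : IsPMF p) (r : U → ℝ)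
    (hr : ∀ u, 0 < p u → 0 < r u) (H : ℝ)
    (hH : ∑ u, p u * -Real.logb 2 (r u) = H) (ε : ℝ) (hε : 0 < ε) :
    Tendsto (fun n : ℕ => ∑ u : Fin n → U, (∏ i, p (u i)) *
      if 0 < (∏ i, p (u i)) ∧ (2 : ℝ) ^ (-(n * (H + ε))) ≤ ∏ i, r (u i) ∧
        ∏ i, r (u i) ≤ (2 : ℝ) ^ (-(n * (H - ε))) then (0 : ℝ) else 1) atTop (nhds 0) := by
  refine squeeze_zero ?_ ?_ (lln hp (fun u => -Real.logb 2 (r u)) H hH ε hε)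
  · exact fun n => Finset.sum_nonneg fun u _ =>
      mul_nonneg (hp.pi.1 u) (by split_ifs <;> norm_num)
  · intro n
    refine Finset.sum_le_sum fun u _ => ?_
    have hpu : 0 ≤ ∏ i, p (u i) := hp.pi.1 u
    rcases hpu.eq_or_lt with h0 | h0
    · rw [← h0]
      simp
    · refine mul_le_mul_of_nonneg_left ?_ h0.le
      by_cases hc : |(∑ i, -Real.logb 2 (r (u i))) - n * H| ≤ n * ε
      · rw [if_pos hc]
        have hpi : ∀ i, 0 < r (u i) := fun i => by
          refine hr _ ((hp.1 _).lt_of_ne ?_)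
          intro hz
          exact h0.ne' (Finset.prod_eq_zero (Finset.mem_univ i) hz.symm)
        have hprod : ∏ i, r (u i) = (2 : ℝ) ^ (-∑ i, -Real.logb 2 (r (u i))) := by
          rw [Finset.sum_neg_distrib, neg_neg, Real.rpow_sum_of_pos (by norm_num)]
          refine Finset.prod_congr rfl fun i _ => ?_
          rw [Real.rpow_logb (by norm_num) (by norm_num) (hpi i)]
        rw [abs_le] at hc
        rw [if_pos]
        refine ⟨h0, ?_, ?_⟩
        · rw [hprod]
          refine Real.rpow_le_rpow_of_exponent_le (by norm_num) ?_
          nlinarith [hc.1, hc.2]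
        · rw [hprod]
          refine Real.rpow_le_rpow_of_exponent_le (by norm_num) ?_
          nlinarith [hc.1, hc.2]
      · rw [if_neg hc]
        split_ifs <;> norm_num

lemma ent_eq {Ω α : Type*} [Fintype Ω] [Fintype α] (p : Ω → ℝ) (X : Ω → α) :
    ent p X = ∑ ω, p ω * -Real.logb 2 (pr p X (X ω)) := by
  rw [← sum_pr_mul p X (fun x => -Real.logb 2 (pr p X x))]
  unfold ent
  refine Finset.sum_congr rfl fun x _ => ?_
  ring

lemma condEnt_eq {U V : Type} [Fintype U] [Fintype V] {p : U → ℝ} (hp : IsPMF p) (h : U → V) :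
    ∑ u, p u * -Real.logb 2 (p u / pr p h (h u)) = condEnt p id h := by
  unfold condEnt
  rw [ent_eq, ent_eq, ← Finset.sum_sub_distrib]
  refine Finset.sum_congr rfl fun u _ => ?_
  have h1 : pr p (fun ω => (id ω, h ω)) (id u, h u) = p u := by
    unfold pr
    rw [Finset.sum_eq_single u]
    · simp
    · intro b _ hb
      simp [hb]
    · simp
  rw [h1]
  rcases (hp.1 u).eq_or_lt with h0 | h0
  · rw [← h0]; simp
  · have h2 : 0 < pr p h (h u) := h0.trans_le (le_pr hp.1 h u)
    rw [Real.logb_div h0.ne' h2.ne']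
    ring

lemma ent_nonneg {U V : Type} [Fintype U] [Fintype V] {p : U → ℝ} (hp : IsPMF p) (h : U → V) :
    0 ≤ ent p h := by
  rw [ent_eq]
  refine Finset.sum_nonneg fun u _ => mul_nonneg (hp.1 u) (neg_nonneg.2 ?_)
  exact Real.logb_nonpos (by norm_num) (pr_nonneg hp.1 _ _) (pr_le_one hp _ _)

lemma condEnt_nonneg {U V : Type} [Fintype U] [Fintype V] {p : U → ℝ} (hp : IsPMF p)
    (h : U → V) : 0 ≤ condEnt p id h := by
  rw [← condEnt_eq hp h]
  refine Finset.sum_nonneg fun u _ => mul_nonneg (hp.1 u) (neg_nonneg.2 ?_)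
  refine Real.logb_nonpos (by norm_num) (div_nonneg (hp.1 u) (pr_nonneg hp.1 _ _)) ?_
  exact div_le_one_of_le₀ (le_pr hp.1 h u) (pr_nonneg hp.1 _ _)

lemma pr_pi {U V : Type} [Fintype U] (p : U → ℝ) (h : U → V) (n : ℕ) (v : Fin n → V) :
    pr (fun u : Fin n → U => ∏ i, p (u i)) (fun u i => h (u i)) v = ∏ i, pr p h (v i) := by
  unfold pr
  rw [← sum_prod_pi (fun i u => if h u = v i then p u else 0)]
  refine Finset.sum_congr rfl fun u _ => ?_
  by_cases hc : ∀ i, h (u i) = v i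
  · rw [if_pos (funext hc)]
    exact Finset.prod_congr rfl fun i _ => (if_pos (hc i)).symm
  · rw [if_neg (fun h' => hc fun i => congrFun h' i)]
    push Not at hc
    obtain ⟨i, hi⟩ := hc
    exact (Finset.prod_eq_zero (Finset.mem_univ i) (if_neg hi)).symm

/-- Sizes used in the converse. -/
noncomputable def msz (R : ℝ) (n : ℕ) : ℕ := ⌈(2 : ℝ) ^ ((n : ℝ) * R)⌉₊

lemma msz_pos (R : ℝ) (n : ℕ) : 0 < msz R n := Nat.ceil_pos.2 (by positivity)

lemma msz_rate (R : ℝ) (n : ℕ) (hn : 0 < n) : R ≤ Real.logb 2 (msz R n) / n := by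
  have hn' : (0 : ℝ) < n := by exact_mod_cast hn
  rw [le_div_iff₀ hn', Real.le_logb_iff_rpow_le (by norm_num) (by exact_mod_cast msz_pos R n),
    mul_comm]
  exact Nat.le_ceil _

lemma msz_bound (H ε : ℝ) (n : ℕ) :
    ((msz (H - 2 * ε) n : ℝ) - 1) * (2 : ℝ) ^ (-((n : ℝ) * (H - ε))) ≤ ((2 : ℝ) ^ (-ε)) ^ n := by
  have h1 : (msz (H - 2 * ε) n : ℝ) - 1 ≤ (2 : ℝ) ^ ((n : ℝ) * (H - 2 * ε)) := by
    have := Nat.ceil_lt_add_one (a := (2 : ℝ) ^ ((n : ℝ) * (H - 2 * ε))) (by positivity)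
    unfold msz
    linarith
  refine (mul_le_mul_of_nonneg_right h1 (by positivity)).trans (le_of_eq ?_)
  rw [← Real.rpow_add (by norm_num), ← Real.rpow_natCast, ← Real.rpow_mul (by norm_num)]
  congr 1
  ring

lemma eta_tendsto {U V : Type} [Fintype U] [Fintype V] {p : U → ℝ} (hp : IsPMF p) (h : U → V)
    (ε : ℝ) (hε : 0 < ε) :
    Tendsto (fun n => etaBound p h (msz (ent p h - 2 * ε) n) (msz (condEnt p id h - 2 * ε) n) n
      ((2 : ℝ) ^ (-((n : ℝ) * (ent p h - ε)))) ((2 : ℝ) ^ (-((n : ℝ) * (condEnt p id h - ε)))))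
      atTop (nhds 0) := by
  have hprpos : ∀ u, 0 < p u → 0 < pr p h (h u) := fun u hu => hu.trans_le (le_pr hp.1 h u)
  have A1 := aep hp (fun u => pr p h (h u)) hprpos (ent p h) (ent_eq p h).symm ε hε
  have A2 := aep hp (fun u => p u / pr p h (h u)) (fun u hu => div_pos hu (hprpos u hu))
    (condEnt p id h) (condEnt_eq hp h) ε hε
  have A3 : Tendsto (fun n : ℕ => ((2 : ℝ) ^ (-ε)) ^ n) atTop (nhds 0) :=
    tendsto_pow_atTop_nhds_zero_of_lt_one (by positivity)
      (Real.rpow_lt_one_of_one_lt_of_neg (by norm_num) (by linarith))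
  have A := (A1.add A3).add (A2.add A3)
  simp only [add_zero] at A
  refine squeeze_zero ?_ ?_ A
  · intro n
    unfold etaBound
    have m1 : (1 : ℝ) ≤ msz (ent p h - 2 * ε) n := by exact_mod_cast msz_pos _ n
    have m2 : (1 : ℝ) ≤ msz (condEnt p id h - 2 * ε) n := by exact_mod_cast msz_pos _ n
    have hs : ∀ q : (Fin n → U) → Prop, 0 ≤ ∑ u : Fin n → U, (∏ i, p (u i)) *
        if q u then (0 : ℝ) else 1 := fun q => Finset.sum_nonneg fun u _ =>
      mul_nonneg (hp.pi.1 u) (by split_ifs <;> norm_num)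
    refine add_nonneg (add_nonneg (hs _) (mul_nonneg (by linarith) (by positivity)))
      (add_nonneg (hs _) (mul_nonneg (by linarith) (by positivity)))
  · intro n
    unfold etaBound
    refine add_le_add (add_le_add ?_ (msz_bound _ ε n)) (add_le_add ?_ (msz_bound _ ε n))
    · refine Finset.sum_le_sum fun u _ => mul_le_mul_of_nonneg_left ?_ (hp.pi.1 u)
      rw [pr_pi]
      split_ifs with c1 c2 c2
      · norm_num
      · norm_num
      · exact absurd c2.2.2 c1
      · norm_num
    · refine Finset.sum_le_sum fun u _ => mul_le_mul_of_nonneg_left ?_ (hp.pi.1 u)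
      rw [pr_pi, ← Finset.prod_div_distrib]
      split_ifs with c1 c2 c2
      · norm_num
      · norm_num
      · exact absurd c2.2.2 c1
      · norm_num

lemma converse_part (ch : X1 × X2 → Y1 × Y2 → ℝ)
    (pU1 : U1 → ℝ) (h1 : U1 → V1) (pU2 : U2 → ℝ) (h2 : U2 → V2)
    (hch : IsKernel ch) (hpU1 : IsPMF pU1) (hpU2 : IsPMF pU2)
    (hrel : ReliableDet ch pU1 h1 pU2 h2) (ε : ℝ) (hε : 0 < ε) :
    AchMsg ch (ent pU1 h1 - 2 * ε, condEnt pU1 id h1 - 2 * ε, ent pU2 h2 - 2 * ε,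
      condEnt pU2 id h2 - 2 * ε) := by
  obtain ⟨f1, f2, g1, g2, hlim⟩ := hrel
  have key := fun n => converse_oneshot ch pU1 h1 pU2 h2 hch hpU1 hpU2 n (f1 n) (f2 n) (g1 n)
    (g2 n) (msz (ent pU1 h1 - 2 * ε) n) (msz (condEnt pU1 id h1 - 2 * ε) n)
    (msz (ent pU2 h2 - 2 * ε) n) (msz (condEnt pU2 id h2 - 2 * ε) n)
    (msz_pos _ n) (msz_pos _ n) (msz_pos _ n) (msz_pos _ n)
    ((2 : ℝ) ^ (-((n : ℝ) * (ent pU1 h1 - ε)))) ((2 : ℝ) ^ (-((n : ℝ) * (condEnt pU1 id h1 - ε))))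
    ((2 : ℝ) ^ (-((n : ℝ) * (ent pU2 h2 - ε)))) ((2 : ℝ) ^ (-((n : ℝ) * (condEnt pU2 id h2 - ε))))
    (by positivity) (by positivity) (by positivity) (by positivity)
  choose F1 F2 G1 G2 hF using key
  refine ⟨_, _, _, _, F1, F2, G1, G2, fun n hn => ⟨msz_rate _ n hn, msz_rate _ n hn,
    msz_rate _ n hn, msz_rate _ n hn⟩, ?_⟩
  have L := (hlim.add (eta_tendsto hpU1 h1 ε hε)).add (eta_tendsto hpU2 h2 ε hε)
  simp only [add_zero] at L
  refine squeeze_zero ?_ hF L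
  intro n
  rw [PerrMsg_eq]
  exact mul_nonneg (by positivity) (Finset.sum_nonneg fun w1 _ => Finset.sum_nonneg fun w2 _ =>
    errY_nonneg (chn_pmf hch n _ _) _)

lemma inj_exists {A : Type} [Fintype A] (S : Finset A) (M : ℕ) [NeZero M] (hS : S.card ≤ M) :
    ∃ f : A → Fin M, Set.InjOn f (S : Set A) := by
  have : Fintype.card S ≤ Fintype.card (Fin M) := by simpa using hS
  obtain ⟨e⟩ := Function.Embedding.nonempty_of_card_le this
  refine ⟨fun a => if h : a ∈ S then e ⟨a, h⟩ else 0, ?_⟩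
  intro a ha b hb hab
  have ha' : a ∈ S := ha
  have hb' : b ∈ S := hb
  simp only [ha', hb', dif_pos] at hab
  simpa using e.injective hab

lemma card_le_of_mass {A : Type} (S : Finset A) (q : A → ℝ) (t : ℝ) (x : ℝ)
    (hq : ∀ a ∈ S, (2 : ℝ) ^ (-x) * t ≤ q a) (hsum : ∑ a ∈ S, q a ≤ t) (ht : 0 < t) :
    (S.card : ℝ) ≤ (2 : ℝ) ^ x := by
  have h1 : S.card • ((2 : ℝ) ^ (-x) * t) ≤ ∑ a ∈ S, q a := Finset.card_nsmul_le_sum S q _ hq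
  rw [nsmul_eq_mul] at h1
  have h2 : (S.card : ℝ) * (2 : ℝ) ^ (-x) * t ≤ 1 * t := by linarith
  have h3 := le_of_mul_le_mul_right h2 ht
  rw [Real.rpow_neg (by norm_num)] at h3
  have hpos : (0 : ℝ) < 2 ^ x := by positivity
  have h4 : (S.card : ℝ) / 2 ^ x ≤ 1 := by rw [div_eq_mul_inv]; exact h3
  exact (div_le_one hpos).1 h4

/-- Source coding indices for one user. -/
lemma source_index {U V : Type} [Fintype U] [Fintype V] {p : U → ℝ} (hp : IsPMF p) (h : U → V)
    (n : ℕ) (x y : ℝ) (Ms Mp : ℕ) [NeZero Ms] [NeZero Mp]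
    (hMs : (2 : ℝ) ^ x ≤ Ms) (hMp : (2 : ℝ) ^ y ≤ Mp) :
    ∃ (ks : (Fin n → V) → Fin Ms) (kp : (Fin n → U) → Fin Mp),
      Set.InjOn (fun u => (ks (fun i => h (u i)), kp u))
        {u : Fin n → U | 0 < (∏ i, p (u i)) ∧ (2 : ℝ) ^ (-x) ≤ ∏ i, pr p h (h (u i)) ∧
          (2 : ℝ) ^ (-y) ≤ ∏ i, (p (u i) / pr p h (h (u i)))} := by
  have hP := hp.pi (ι := Fin n)
  set P : (Fin n → U) → ℝ := fun u => ∏ i, p (u i) with hPdef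
  set pj : (Fin n → U) → (Fin n → V) := fun u i => h (u i) with hpj
  have hprpi : ∀ v, pr P pj v = ∏ i, pr p h (v i) := pr_pi p h n
  obtain ⟨ks, hks⟩ := inj_exists (Finset.univ.filter fun v => (2 : ℝ) ^ (-x) ≤ pr P pj v) Ms (by
    have := card_le_of_mass (Finset.univ.filter fun v => (2 : ℝ) ^ (-x) ≤ pr P pj v)
      (pr P pj) 1 x (by intro a ha; simpa using ha) (by
        rw [← sum_pr hP pj]
        exact Finset.sum_le_sum_of_subset_of_nonneg (Finset.filter_subset _ _)
          fun i _ _ => pr_nonneg hP.1 _ _) one_pos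
    exact_mod_cast this.trans hMs)
  have hkp : ∀ v, ∃ f : (Fin n → U) → Fin Mp, Set.InjOn f
      {u | pj u = v ∧ 0 < P u ∧ (2 : ℝ) ^ (-y) ≤ P u / pr P pj v} := by
    intro v
    set S := Finset.univ.filter fun u => pj u = v ∧ 0 < P u ∧ (2 : ℝ) ^ (-y) ≤ P u / pr P pj v
      with hS
    obtain ⟨f, hf⟩ := inj_exists S Mp (by
      by_cases hv : 0 < pr P pj v
      · have := card_le_of_mass S P (pr P pj v) y (by
          intro a ha
          simp only [hS, Finset.mem_filter] at ha
          exact (le_div_iff₀ hv).1 ha.2.2.2) (by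
            have : pr P pj v = ∑ u ∈ Finset.univ.filter (fun u => pj u = v), P u := by
              rw [Finset.sum_filter]
              unfold pr
              congr! 2
            rw [this]
            refine Finset.sum_le_sum_of_subset_of_nonneg ?_ fun i _ _ => hP.1 i
            intro u hu
            simp only [hS, Finset.mem_filter] at hu ⊢
            exact ⟨hu.1, hu.2.1⟩) hv
        exact_mod_cast this.trans hMp
      · have : S = ∅ := by
          rw [Finset.eq_empty_iff_forall_notMem]
          intro u hu
          simp only [hS, Finset.mem_filter] at hu
          have := le_pr hP.1 pj u
          rw [hu.2.1] at this
          exact hv (hu.2.2.1.trans_le this)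
        rw [this]
        simp)
    refine ⟨f, ?_⟩
    intro a ha b hb hab
    exact hf (by simpa [hS] using ha) (by simpa [hS] using hb) hab
  choose kp hkp using hkp
  refine ⟨ks, fun u => kp (pj u) u, ?_⟩
  intro a ha b hb hab
  simp only [Prod.mk.injEq] at hab
  have hdiv : ∀ u, ∏ i, (p (u i) / pr p h (h (u i))) = P u / pr P pj (pj u) := by
    intro u
    rw [Finset.prod_div_distrib, hprpi]
  obtain ⟨ha1, ha2, ha3⟩ := ha
  obtain ⟨hb1, hb2, hb3⟩ := hb
  rw [hdiv] at ha3 hb3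
  have hv : pj a = pj b := by
    refine hks ?_ ?_ hab.1
    · simp only [Finset.coe_filter, Finset.mem_univ, true_and, Set.mem_ofPred_eq, hprpi]
      exact ha2
    · simp only [Finset.coe_filter, Finset.mem_univ, true_and, Set.mem_ofPred_eq, hprpi]
      exact hb2
  have hab2 := hab.2
  rw [hv] at hab2 ha3
  exact hkp (pj b) ⟨hv, ha1, ha3⟩ ⟨rfl, hb1, hb3⟩ hab2

lemma atyp_tendsto {U V : Type} [Fintype U] [Fintype V] {p : U → ℝ} (hp : IsPMF p) (h : U → V)
    (R S : ℝ) (hR : ent p h < R) (hS : condEnt p id h < S) :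
    Tendsto (fun n : ℕ => ∑ u : Fin n → U, (∏ i, p (u i)) *
      if u ∈ {u : Fin n → U | 0 < (∏ i, p (u i)) ∧
        (2 : ℝ) ^ (-((n : ℝ) * R)) ≤ ∏ i, pr p h (h (u i)) ∧
          (2 : ℝ) ^ (-((n : ℝ) * S)) ≤ ∏ i, (p (u i) / pr p h (h (u i)))} then (0 : ℝ) else 1)
      atTop (nhds 0) := by
  have hprpos : ∀ u, 0 < p u → 0 < pr p h (h u) := fun u hu => hu.trans_le (le_pr hp.1 h u)
  have A1 := aep hp (fun u => pr p h (h u)) hprpos (ent p h) (ent_eq p h).symm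
    (R - ent p h) (by linarith)
  have A2 := aep hp (fun u => p u / pr p h (h u)) (fun u hu => div_pos hu (hprpos u hu))
    (condEnt p id h) (condEnt_eq hp h) (S - condEnt p id h) (by linarith)
  have A := A1.add A2
  simp only [add_zero, add_sub_cancel] at A
  refine squeeze_zero ?_ ?_ A
  · exact fun n => Finset.sum_nonneg fun u _ =>
      mul_nonneg (hp.pi.1 u) (by split_ifs <;> norm_num)
  · intro n
    rw [← Finset.sum_add_distrib]
    refine Finset.sum_le_sum fun u _ => ?_
    rw [← mul_add]
    refine mul_le_mul_of_nonneg_left ?_ (hp.pi.1 u)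
    by_cases c2 : 0 < ∏ i, p (u i) ∧
        (2 : ℝ) ^ (-((n : ℝ) * R)) ≤ ∏ i, pr p h (h (u i)) ∧
        ∏ i, pr p h (h (u i)) ≤ (2 : ℝ) ^ (-((n : ℝ) * (ent p h - (R - ent p h))))
    · by_cases c3 : (2 : ℝ) ^ (-((n : ℝ) * S)) ≤ ∏ i, (p (u i) / pr p h (h (u i)))
      · rw [if_pos ⟨c2.1, c2.2.1, c3⟩]
        split_ifs <;> norm_num
      · rw [if_neg (fun hh => c3 hh.2.2), if_pos c2, if_neg (fun hh => c3 hh.2.1)]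
        norm_num
    · rw [if_neg c2]
      split_ifs <;> norm_num

lemma size_of_rate (R : ℝ) (hR : 0 < R) (n M : ℕ) (hn : 0 < n) (h : R ≤ Real.logb 2 M / n) :
    M ≠ 0 ∧ (2 : ℝ) ^ ((n : ℝ) * R) ≤ M := by
  have hn' : (0 : ℝ) < n := by exact_mod_cast hn
  have hM : M ≠ 0 := by
    rintro rfl
    simp at h
    linarith
  refine ⟨hM, ?_⟩
  rw [le_div_iff₀ hn'] at h
  rw [← Real.le_logb_iff_rpow_le (by norm_num) (by positivity), mul_comm]
  exact h

lemma forward_part (ch : X1 × X2 → Y1 × Y2 → ℝ)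
    (pU1 : U1 → ℝ) (h1 : U1 → V1) (pU2 : U2 → ℝ) (h2 : U2 → V2)
    (hch : IsKernel ch) (hpU1 : IsPMF pU1) (hpU2 : IsPMF pU2) (R : ℝ × ℝ × ℝ × ℝ)
    (hA : AchMsg ch R) (r1 : ent pU1 h1 < R.1) (r2 : condEnt pU1 id h1 < R.2.1)
    (r3 : ent pU2 h2 < R.2.2.1) (r4 : condEnt pU2 id h2 < R.2.2.2) :
    ReliableDet ch pU1 h1 pU2 h2 := by
  obtain ⟨M1s, M1p, M2s, M2p, f1, f2, g1, g2, hrate, hlim⟩ := hA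
  let τ1 : ℕ → ℝ := fun n => ∑ u : Fin n → U1, (∏ i, pU1 (u i)) *
      if u ∈ {u : Fin n → U1 | 0 < (∏ i, pU1 (u i)) ∧
        (2 : ℝ) ^ (-((n : ℝ) * R.1)) ≤ ∏ i, pr pU1 h1 (h1 (u i)) ∧
          (2 : ℝ) ^ (-((n : ℝ) * R.2.1)) ≤ ∏ i, (pU1 (u i) / pr pU1 h1 (h1 (u i)))}
      then (0 : ℝ) else 1
  let τ2 : ℕ → ℝ := fun n => ∑ u : Fin n → U2, (∏ i, pU2 (u i)) *
      if u ∈ {u : Fin n → U2 | 0 < (∏ i, pU2 (u i)) ∧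
        (2 : ℝ) ^ (-((n : ℝ) * R.2.2.1)) ≤ ∏ i, pr pU2 h2 (h2 (u i)) ∧
          (2 : ℝ) ^ (-((n : ℝ) * R.2.2.2)) ≤ ∏ i, (pU2 (u i) / pr pU2 h2 (h2 (u i)))}
      then (0 : ℝ) else 1
  have hτ1 : Tendsto τ1 atTop (nhds 0) := atyp_tendsto hpU1 h1 R.1 R.2.1 r1 r2
  have hτ2 : Tendsto τ2 atTop (nhds 0) := atyp_tendsto hpU2 h2 R.2.2.1 R.2.2.2 r3 r4
  have key : ∀ n : ℕ, ∃ (f1' : (Fin n → U1) → Fin n → X1) (f2' : (Fin n → U2) → Fin n → X2)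
      (g1' : (Fin n → Y1) → (Fin n → V2) → Fin n → U1)
      (g2' : (Fin n → Y2) → (Fin n → V1) → Fin n → U2), 0 < n →
      PerrDet ch pU1 h1 pU2 h2 n f1' f2' g1' g2' ≤
        PerrMsg ch n (M1s n) (M1p n) (M2s n) (M2p n) (f1 n) (f2 n) (g1 n) (g2 n)
        + τ1 n + τ2 n := by
    intro n
    rcases Nat.eq_zero_or_pos n with rfl | hn
    · exact ⟨fun _ i => i.elim0, fun _ i => i.elim0, fun _ _ i => i.elim0, fun _ _ i => i.elim0,
        fun h => absurd h (lt_irrefl _)⟩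
    · obtain ⟨q1, q2, q3, q4⟩ := hrate n hn
      obtain ⟨n1, s1⟩ := size_of_rate _ ((ent_nonneg hpU1 h1).trans_lt r1) n _ hn q1
      obtain ⟨n2, s2⟩ := size_of_rate _ ((condEnt_nonneg hpU1 h1).trans_lt r2) n _ hn q2
      obtain ⟨n3, s3⟩ := size_of_rate _ ((ent_nonneg hpU2 h2).trans_lt r3) n _ hn q3
      obtain ⟨n4, s4⟩ := size_of_rate _ ((condEnt_nonneg hpU2 h2).trans_lt r4) n _ hn q4
      have : NeZero (M1s n) := ⟨n1⟩
      have : NeZero (M1p n) := ⟨n2⟩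
      have : NeZero (M2s n) := ⟨n3⟩
      have : NeZero (M2p n) := ⟨n4⟩
      obtain ⟨k1s, k1p, hk1⟩ := source_index hpU1 h1 n _ _ (M1s n) (M1p n) s1 s2
      obtain ⟨k2s, k2p, hk2⟩ := source_index hpU2 h2 n _ _ (M2s n) (M2p n) s3 s4
      obtain ⟨F1, F2, G1, G2, hF⟩ := forward_oneshot ch pU1 h1 pU2 h2 hch hpU1 hpU2 n _ _ _ _
        (f1 n) (f2 n) (g1 n) (g2 n) _ _ k1s k1p k2s k2p hk1 hk2
      refine ⟨F1, F2, G1, G2, fun _ => hF.trans (le_of_eq ?_)⟩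
      dsimp only [τ1, τ2]
      congr!
  choose F1 F2 G1 G2 hF using key
  refine ⟨F1, F2, G1, G2, ?_⟩
  have L := (hlim.add hτ1).add hτ2
  simp only [add_zero] at L
  refine tendsto_of_tendsto_of_tendsto_of_le_of_le' tendsto_const_nhds L ?_ ?_
  · refine Eventually.of_forall fun n => ?_
    rw [PerrDet_eq]
    exact Finset.sum_nonneg fun u1 _ => mul_nonneg (hpU1.pi.1 u1)
      (Finset.sum_nonneg fun u2 _ => mul_nonneg (hpU2.pi.1 u2)
        (errY_nonneg (chn_pmf hch n _ _) _))
  · filter_upwards [eventually_gt_atTop 0] with n hn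
    exact hF n hn

end Helpers

theorem stmt4 (ch : X1 × X2 → Y1 × Y2 → ℝ)
    (pU1 : U1 → ℝ) (h1 : U1 → V1) (pU2 : U2 → ℝ) (h2 : U2 → V2)
    (hch : IsKernel ch) (hpU1 : IsPMF pU1) (hpU2 : IsPMF pU2) :
    (((ent pU1 h1, condEnt pU1 id h1, ent pU2 h2, condEnt pU2 id h2) : ℝ × ℝ × ℝ × ℝ) ∈
        interior (capMsg ch) → ReliableDet ch pU1 h1 pU2 h2) ∧
    (((ent pU1 h1, condEnt pU1 id h1, ent pU2 h2, condEnt pU2 id h2) : ℝ × ℝ × ℝ × ℝ) ∉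
        capMsg ch → ¬ ReliableDet ch pU1 h1 pU2 h2) := by
  constructor
  · intro hint
    set a := ent pU1 h1
    set b := condEnt pU1 id h1
    set c := ent pU2 h2
    set d := condEnt pU2 id h2
    have hcont : Tendsto (fun t : ℝ => ((a + t, b + t, c + t, d + t) : ℝ × ℝ × ℝ × ℝ))
        (nhdsWithin 0 (Set.Ioi 0)) (nhds (a, b, c, d)) := by
      have : Continuous (fun t : ℝ => ((a + t, b + t, c + t, d + t) : ℝ × ℝ × ℝ × ℝ)) := by
        fun_prop
      have h0 := this.tendsto 0
      simp only [add_zero] at h0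
      exact h0.mono_left nhdsWithin_le_nhds
    have hev := hcont.eventually (mem_interior_iff_mem_nhds.1 hint)
    obtain ⟨t, htc, ht⟩ := (hev.and self_mem_nhdsWithin).exists
    have ht' : (0 : ℝ) < t := ht
    have hopen : IsOpen {z : ℝ × ℝ × ℝ × ℝ | a < z.1 ∧ b < z.2.1 ∧ c < z.2.2.1 ∧ d < z.2.2.2} := by
      have o1 : IsOpen {z : ℝ × ℝ × ℝ × ℝ | a < z.1} := isOpen_lt (by fun_prop) (by fun_prop)
      have o2 : IsOpen {z : ℝ × ℝ × ℝ × ℝ | b < z.2.1} := isOpen_lt (by fun_prop) (by fun_prop)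
      have o3 : IsOpen {z : ℝ × ℝ × ℝ × ℝ | c < z.2.2.1} := isOpen_lt (by fun_prop) (by fun_prop)
      have o4 : IsOpen {z : ℝ × ℝ × ℝ × ℝ | d < z.2.2.2} := isOpen_lt (by fun_prop) (by fun_prop)
      exact o1.inter (o2.inter (o3.inter o4))
    obtain ⟨z, hz, hzA⟩ := mem_closure_iff.1 htc _ hopen
      ⟨by simpa using ht', by simpa using ht', by simpa using ht', by simpa using ht'⟩
    exact forward_part ch pU1 h1 pU2 h2 hch hpU1 hpU2 z hzA hz.1 hz.2.1 hz.2.2.1 hz.2.2.2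
  · intro hnot hrel
    apply hnot
    have hcont : Tendsto (fun t : ℝ => ((ent pU1 h1 - 2 * t, condEnt pU1 id h1 - 2 * t,
        ent pU2 h2 - 2 * t, condEnt pU2 id h2 - 2 * t) : ℝ × ℝ × ℝ × ℝ))
        (nhdsWithin 0 (Set.Ioi 0))
        (nhds (ent pU1 h1, condEnt pU1 id h1, ent pU2 h2, condEnt pU2 id h2)) := by
      have : Continuous (fun t : ℝ => ((ent pU1 h1 - 2 * t, condEnt pU1 id h1 - 2 * t,
        ent pU2 h2 - 2 * t, condEnt pU2 id h2 - 2 * t) : ℝ × ℝ × ℝ × ℝ)) := by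
        fun_prop
      have h0 := this.tendsto 0
      simp only [mul_zero, sub_zero] at h0
      exact h0.mono_left nhdsWithin_le_nhds
    refine mem_closure_of_tendsto hcont ?_
    filter_upwards [self_mem_nhdsWithin] with t ht
    exact converse_part ch pU1 h1 pU2 h2 hch hpU1 hpU2 hrel t ht

end Stmt4

end Paper
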